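/- Let f : 𝖱^n → 𝖱 be continuous and let I ⊆ N = {1,…,n} be nonempty. (i) If f is I-bounded, then the set of countable ordinals α such that for every b ∈ [0,α]^{N∖I} the restriction of f to E_I(b,α) is constant, contains a closed unbounded subset of ω₁. (ii) If f is I-cofinal, then the set of countable ordinals α such that f(Δ_I(b) ∩ M_I(α)) ⊆ [α, ω₁) for every b ∈ [0,α]^{N∖I}, contains a closed unbounded subset of ω₁. -/

import Mathlib

noncomputable section
open Set

/-- The first uncountable ordinal `ω₁`. -/
def Omega1 : Ordinal := Ordinal.omega 1

/-- The closed long ray `𝖱`: `ω₁ × [0,1)` with the lexicographic order. -/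
def LongRay : Type 1 := {o : Ordinal // o < Omega1} ×ₗ (Set.Ico (0:ℝ) 1)

instance : LinearOrder LongRay :=
  inferInstanceAs (LinearOrder ({o : Ordinal // o < Omega1} ×ₗ (Set.Ico (0:ℝ) 1)))

/-- `𝖱` carries the order topology. -/
instance : TopologicalSpace LongRay := Preorder.topology LongRay
instance : OrderTopology LongRay := ⟨rfl⟩

lemma omega1_pos : (0 : Ordinal) < Omega1 := Ordinal.omega_pos 1

/-- The point `0 = (0,0)` of the long ray. -/
def rayZero : LongRay := toLex (⟨0, omega1_pos⟩, ⟨0, by simp⟩)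

/-- Identification of the countable ordinal `o` with the point `(o,0)` of the long ray
(junk value for `o ≥ ω₁`). -/
def ordR (o : Ordinal) : LongRay :=
  if h : o < Omega1 then toLex (⟨o, h⟩, ⟨0, by simp⟩) else rayZero

/-- The `I`-diagonal at height `c` (only the values of `c` off `I` are relevant). -/
def Delta (n : ℕ) (I : Finset (Fin n)) (c : Fin n → LongRay) : Set (Fin n → LongRay) :=
  {x | (∀ i ∈ I, ∀ i' ∈ I, x i = x i') ∧ ∀ j ∉ I, x j = c j}

/-- `f` is `I`-cofinal if `f` restricted to `Δ_I = Δ_I(0)` is unbounded. -/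
def ICofinal (n : ℕ) (f : (Fin n → LongRay) → LongRay) (I : Finset (Fin n)) : Prop :=
  ¬ BddAbove (f '' Delta n I (fun _ => rayZero))

/-- The cofinality class `𝔠(f) = {I : f is I-cofinal}`. -/
def cofClass (n : ℕ) (f : (Fin n → LongRay) → LongRay) : Set (Finset (Fin n)) :=
  {I | ICofinal n f I}

/-- `M_I(c) = {x : x_i ≥ c for all i ∈ I}`. -/
def MSet (n : ℕ) (I : Finset (Fin n)) (c : LongRay) : Set (Fin n → LongRay) :=
  {x | ∀ i ∈ I, c ≤ x i}

/-- `E_I(b,d) = {x ∈ M_I(d) : x_j = b_j for all j ∉ I}`. -/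
def ESet (n : ℕ) (I : Finset (Fin n)) (b : Fin n → LongRay) (d : LongRay) :
    Set (Fin n → LongRay) :=
  {x | (∀ i ∈ I, d ≤ x i) ∧ ∀ j ∉ I, x j = b j}

/-- `S` contains a subset of `ω₁` that is unbounded in `ω₁` and closed under suprema
of countable subsets (i.e. a club of `ω₁`). -/
def ContainsClub (S : Set Ordinal) : Prop :=
  ∃ C : Set Ordinal, C ⊆ S ∧ (∀ a < Omega1, ∃ b ∈ C, a ≤ b) ∧
    (∀ T ⊆ C, T.Countable → T.Nonempty → sSup T ∈ C)

/-!
Let `g b x` be continuous in `b ∈ Y` and `x ∈ 𝖱^I`, with `I` countable. A closed subset of a power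
of `𝖱` with points arbitrarily far out contains constant points arbitrarily far out: interleave the
coordinates of a sequence of its points. Apply this to the pairs `(x, y)` for which some `b` in a
compact set has `g b x ≤ p` and `q ≤ g b y`, where `p < q`: on the diagonal there are none, so
beyond some threshold uniform in `b` no such crossing occurs. Hence the set of `b` for which `g b`
is bounded on the diagonal is clopen, so it is everything or empty when `Y` is connected. In the
first case countably many pairs `p < q` separate all values in question, and `g b` is eventually
constant; in the second, `g b` eventually exceeds any given bound; both uniformly for `b` in a
compact set. Diagonal intersection turns these thresholds into clubs, which gives the claim for
parameters in `[0,α)^{N∖I}`, and continuity in `b` extends it to `[0,α]^{N∖I}`.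
-/

open Filter Function TopologicalSpace Topology

section OrderTopology

theorem isClosed_setOf_exists_mem_of_isCompact {Y Z : Type*} [TopologicalSpace Y]
    [TopologicalSpace Z] {K : Set Y} (hK : IsCompact K) {C : Set (Y × Z)} (hC : IsClosed C) :
    IsClosed {z | ∃ b ∈ K, (b, z) ∈ C} := by
  have := isCompact_iff_compactSpace.1 hK
  have hC' : IsClosed {w : K × Z | (w.1.1, w.2) ∈ C} := hC.preimage (by fun_prop)
  convert isClosedMap_snd_of_compactSpace _ hC'
  ext z
  simp

theorem separableSpace_of_isOpen {X : Type*} [TopologicalSpace X] {s : Set X} (hs : IsOpen s)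
    (h : IsSeparable s) : SeparableSpace s := by
  obtain ⟨c, hc, hsc⟩ := h
  refine ⟨(↑) ⁻¹' c, hc.preimage Subtype.val_injective, Subtype.dense_iff.2 fun x hx => ?_⟩
  rw [Subtype.image_preimage_coe]
  exact hs.inter_closure ⟨hx, hsc hx⟩

variable {X : Type*} [LinearOrder X]

theorem countableInterFilter_atTop_of_bddAbove (h : ∀ s : Set X, s.Countable → BddAbove s) :
    CountableInterFilter (atTop : Filter X) where
  countable_sInter_mem S hS hmem := by
    have : Nonempty X := (h ∅ countable_empty).nonempty
    choose! a ha using fun s hs => mem_atTop_sets.1 (hmem s hs)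
    obtain ⟨A, hA⟩ := h (a '' S) (hS.image a)
    exact mem_atTop_sets.2 ⟨A, fun x hx s hs => ha s hs x ((hA (mem_image_of_mem a hs)).trans hx)⟩

variable [TopologicalSpace X]

theorem bddAbove_range_iff_isBoundedUnder_atTop {Y : Type*} [OrderBot X] [CompactIccSpace X]
    [LinearOrder Y] [TopologicalSpace Y] [ClosedIciTopology Y] {h : X → Y} (hh : Continuous h) :
    BddAbove (range h) ↔ IsBoundedUnder (· ≤ ·) atTop h := by
  refine ⟨fun hb => hb.isBoundedUnder_of_range, fun ⟨z, hz⟩ => ?_⟩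
  obtain ⟨a, ha⟩ := eventually_atTop.1 (eventually_map.1 hz)
  have : Nonempty Y := ⟨z⟩
  obtain ⟨w, hw⟩ := (isCompact_Icc (a := ⊥) (b := a)).bddAbove_image hh.continuousOn
  refine ⟨max z w, forall_mem_range.2 fun t => ?_⟩
  rcases le_total a t with ht | ht
  · exact le_max_of_le_left (ha t ht)
  · exact le_max_of_le_right (hw (mem_image_of_mem h ⟨bot_le, ht⟩))

variable [OrderTopology X]

theorem weaklyLocallyCompactSpace_of_orderBot [OrderBot X] [NoMaxOrder X] [CompactIccSpace X] :
    WeaklyLocallyCompactSpace X where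
  exists_compact_mem_nhds x :=
    let ⟨y, hy⟩ := exists_gt x
    ⟨Icc ⊥ y, isCompact_Icc, mem_of_superset (Iic_mem_nhds hy) fun _ ht => ⟨bot_le, ht⟩⟩

variable [DenselyOrdered X]

theorem Iic_const_subset_of_isClosed {κ : Type*} [Finite κ] [OrderBot X] {a : X} (ha : ⊥ < a)
    {S : Set (κ → X)} (hS : IsClosed S) (h : ∀ r < a, Iic (const κ r) ⊆ S) :
    Iic (const κ a) ⊆ S := by
  cases nonempty_fintype κ
  have hIio : (univ.pi fun _ : κ => Iio a) ⊆ S := fun c hc =>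
    h (Finset.univ.sup c) ((Finset.sup_lt_iff ha).2 fun j _ => hc j (mem_univ j))
      fun j => Finset.le_sup (Finset.mem_univ j)
  refine Subset.trans (fun c hc => ?_) (closure_minimal hIio hS)
  rw [closure_pi_set, closure_Iio' ⟨⊥, ha⟩]
  exact fun j _ => hc j

variable [NoMaxOrder X]

theorem firstCountableTopology_of_isSeparable_Iic (h : ∀ z : X, IsSeparable (Iic z)) :
    FirstCountableTopology X where
  nhds_generated_countable a := by
    obtain ⟨z, hz⟩ := exists_gt a
    have := separableSpace_of_isOpen isOpen_Iio ((h z).mono Iio_subset_Iic_self)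
    have := SecondCountableTopology.of_separableSpace_orderTopology (Iio z)
    rw [← map_nhds_subtype_coe_eq_nhds (show a ∈ Iio z from hz) (Iio_mem_nhds hz)]
    infer_instance

theorem exists_countable_forall_exists_between (h : ∀ z : X, IsSeparable (Iic z)) (w : X) :
    ∃ D : Set X, D.Countable ∧ ∀ x y, x < y → x ≤ w → ∃ d ∈ D, x < d ∧ d < y := by
  obtain ⟨z', hz'⟩ := exists_gt w
  obtain ⟨D, hD, hsub⟩ := h z'
  refine ⟨D, hD, fun x y hxy hxz => ?_⟩
  obtain ⟨m, hxm, hm⟩ := exists_between (lt_min hxy (hxz.trans_lt hz'))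
  obtain ⟨d, hd, hdD⟩ := mem_closure_iff.1 (hsub (hm.trans_le (min_le_right _ _)).le)
    (Ioo x (min y z')) isOpen_Ioo ⟨hxm, hm⟩
  exact ⟨d, hdD, hd.1, hd.2.trans_le (min_le_left _ _)⟩

end OrderTopology

section LeastUpperBounds

theorem exists_isLUB_lex {α β : Type*} [LinearOrder α] [WellFoundedLT α]
    [ConditionallyCompleteLinearOrder β] [OrderBot β] {s : Set (α ×ₗ β)} (hs : BddAbove s) :
    ∃ x, IsLUB s x := by
  obtain ⟨a, ⟨t, ht⟩, hmin⟩ := exists_minimal_of_wellFoundedLT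
    (fun a => ∃ t, toLex (a, t) ∈ upperBounds s) (let ⟨u, hu⟩ := hs; ⟨u.1, u.2, hu⟩)
  refine ⟨toLex (a, sInf {t | toLex (a, t) ∈ upperBounds s}), fun x hx => ?_, fun v hv => ?_⟩
  · refine Prod.Lex.le_iff'.2 ⟨(Prod.Lex.le_iff'.1 (ht hx)).1, fun hxa => ?_⟩
    exact le_csInf ⟨t, ht⟩ fun t' ht' => (Prod.Lex.le_iff'.1 (ht' hx)).2 hxa
  · refine Prod.Lex.le_iff'.2 ⟨le_of_not_gt fun h => h.not_ge (hmin ⟨_, hv⟩ h.le), ?_⟩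
    rintro rfl
    exact csInf_le (OrderBot.bddBelow _) hv

open Classical in
/-- The conditionally complete structure on a linear order with a least element in which every
bounded set has a least upper bound; unbounded sets get the junk supremum `⊥`. -/
abbrev conditionallyCompleteLinearOrderOfIsLUB {X : Type*} [LinearOrder X] [OrderBot X]
    (h : ∀ s : Set X, BddAbove s → ∃ x, IsLUB s x) : ConditionallyCompleteLinearOrder X :=
  letI : SupSet X := ⟨fun s => if hs : BddAbove s then (h s hs).choose else ⊥⟩
  have isLUB_sSup (s : Set X) (hs : BddAbove s) : IsLUB s (sSup s) := by
    rw [show sSup s = (h s hs).choose from dif_pos hs]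
    exact (h s hs).choose_spec
  { (inferInstance : LinearOrder X),
    conditionallyCompleteLatticeOfLatticeOfsSup X fun s hs _ => isLUB_sSup s hs with
    csSup_of_not_bddAbove s hs :=
      (dif_neg hs).trans ((isLUB_sSup ∅ bddAbove_empty).unique isLUB_empty).symm
    csInf_of_not_bddBelow s hs := absurd (OrderBot.bddBelow s) hs }

end LeastUpperBounds

section Interleaving

variable {X Y ι : Type*} [ConditionallyCompleteLinearOrder X] [TopologicalSpace X]
  [OrderTopology X] [CountableInterFilter (atTop : Filter X)] [Countable ι] [TopologicalSpace Y]

/- Pick points of `F` such that each is above all coordinates of the previous one: all coordinates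
then converge to the same supremum. -/
theorem exists_const_mem_of_isClosed {F : Set (ι → X)} (hF : IsClosed F)
    (h : ∀ α, ∃ x ∈ F, const ι α ≤ x) (α : X) : ∃ γ ≥ α, const ι γ ∈ F := by
  choose x hxF hx using h
  have hnext (β : X) : ∃ β' ≥ β, x β ≤ const ι β' :=
    ((eventually_ge_atTop β).and (eventually_countable_forall.2 fun i =>
      eventually_ge_atTop (x β i))).exists
  choose next hle hnext using hnext
  let u (k : ℕ) : X := next^[k] α
  have hu (k : ℕ) : u (k + 1) = next (u k) := iterate_succ_apply' next k α
  have hmono : Monotone u := monotone_nat_of_le_succ fun k => (hle _).trans_eq (hu k).symm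
  have hbdd : BddAbove (range u) :=
    let ⟨z, hz⟩ := (eventually_countable_forall.2 fun k => eventually_ge_atTop (u k)).exists
    ⟨z, forall_mem_range.2 hz⟩
  have hlim : Tendsto u atTop (𝓝 (⨆ k, u k)) := tendsto_atTop_ciSup hmono hbdd
  refine ⟨⨆ k, u k, le_ciSup hbdd 0, hF.mem_of_tendsto (b := atTop) (f := fun k => x (u k))
    (tendsto_pi_nhds.2 fun i => ?_) (Eventually.of_forall fun k => hxF _)⟩
  exact tendsto_of_tendsto_of_tendsto_of_le_of_le hlim (hlim.comp (tendsto_add_atTop_nat 1))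
    (fun k => hx (u k) i) fun k => (hnext (u k) i).trans_eq (hu k).symm

variable {g : Y → (ι → X) → X} {K : Set Y}

theorem eventually_forall_lt_of_le (hg : Continuous (uncurry g)) (hK : IsCompact K) {p q : X}
    (hpq : p < q) :
    ∀ᶠ α in atTop, ∀ b ∈ K, ∀ x y, const ι α ≤ x → const ι α ≤ y → g b x ≤ p → g b y < q := by
  let C : Set (Y × (ι ⊕ ι → X)) :=
    {w | g w.1 (w.2 ∘ Sum.inl) ≤ p ∧ q ≤ g w.1 (w.2 ∘ Sum.inr)}
  have hcont (e : ι → ι ⊕ ι) : Continuous fun w : Y × (ι ⊕ ι → X) => g w.1 (w.2 ∘ e) :=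
    hg.comp (f := fun w : Y × (ι ⊕ ι → X) => (w.1, w.2 ∘ e)) (by fun_prop)
  have hC : IsClosed C :=
    (isClosed_le (hcont _) continuous_const).inter (isClosed_le continuous_const (hcont _))
  by_contra hcon
  have : Nonempty X := ⟨p⟩
  have hfar (α : X) : ∃ z ∈ {z | ∃ b ∈ K, (b, z) ∈ C}, const (ι ⊕ ι) α ≤ z := by
    obtain ⟨α', hα', h⟩ := frequently_atTop.1 (not_eventually.1 hcon) α
    push Not at h
    obtain ⟨b, hb, x, y, hx, hy, hp, hq⟩ := h
    exact ⟨Sum.elim x y, ⟨b, hb, hp, hq⟩,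
      Sum.forall.2 ⟨fun i => hα'.trans (hx i), fun i => hα'.trans (hy i)⟩⟩
  obtain ⟨γ, -, b, -, hp, hq⟩ :=
    exists_const_mem_of_isClosed (isClosed_setOf_exists_mem_of_isCompact hK hC) hfar p
  exact (hq.trans hp).not_gt hpq

theorem exists_mem_nhds_isCompact_eventually_forall_le [NoMaxOrder X] [WeaklyLocallyCompactSpace Y]
    (hg : Continuous (uncurry g)) {b : Y}
    (hb : IsBoundedUnder (· ≤ ·) atTop fun t => g b (const ι t)) :
    ∃ U ∈ 𝓝 b, IsCompact U ∧ ∃ q, ∀ᶠ α in atTop, ∀ c ∈ U, ∀ x, const ι α ≤ x → g c x ≤ q := by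
  obtain ⟨K, hK, hKb⟩ := exists_compact_mem_nhds b
  obtain ⟨r, hr⟩ := hb
  obtain ⟨p, hrp⟩ := exists_gt r
  obtain ⟨q, hpq⟩ := exists_gt p
  have : Nonempty X := ⟨r⟩
  obtain ⟨α, hα, hbα⟩ :=
    ((eventually_forall_lt_of_le hg hK hpq).and (eventually_map.1 hr)).exists
  have hcont : Continuous fun c => g c (const ι α) := hg.comp (Continuous.prodMk_left _)
  refine ⟨K ∩ {c | g c (const ι α) ≤ p}, inter_mem hKb ?_,
    hK.inter_right (isClosed_le hcont continuous_const), q, ?_⟩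
  · exact (hcont.tendsto b).eventually_le_const (hbα.trans_lt hrp)
  · filter_upwards [eventually_ge_atTop α] with α' hα' c hc x hx
    exact (hα c hc.1 _ x le_rfl (le_trans (fun _ => hα') hx) hc.2).le

theorem isClopen_setOf_isBoundedUnder [NoMaxOrder X] [WeaklyLocallyCompactSpace Y]
    [SequentialSpace Y] (hg : Continuous (uncurry g)) :
    IsClopen {b | IsBoundedUnder (· ≤ ·) atTop fun t => g b (const ι t)} := by
  constructor
  · refine IsSeqClosed.isClosed fun b c hb hlim => ?_
    choose z hz using hb
    obtain ⟨Z, hZ⟩ :=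
      (eventually_countable_forall.2 fun k => eventually_ge_atTop (z k)).exists
    refine ⟨Z, eventually_map.2 ?_⟩
    filter_upwards [eventually_countable_forall.2 fun k => eventually_map.1 (hz k)] with t ht
    have := (hg.tendsto (c, const ι t)).comp (hlim.prodMk_nhds tendsto_const_nhds)
    exact le_of_tendsto' this fun k => (ht k).trans (hZ k)
  · refine isOpen_iff_mem_nhds.2 fun b hb => ?_
    obtain ⟨U, hU, -, q, hq⟩ := exists_mem_nhds_isCompact_eventually_forall_le hg hb
    filter_upwards [hU] with c hc
    exact ⟨q, eventually_map.2 (hq.mono fun t ht => ht c hc _ le_rfl)⟩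

theorem isBoundedUnder_iff_of_preconnectedSpace [NoMaxOrder X] [WeaklyLocallyCompactSpace Y]
    [SequentialSpace Y] [PreconnectedSpace Y] (hg : Continuous (uncurry g)) (b c : Y) :
    (IsBoundedUnder (· ≤ ·) atTop fun t => g b (const ι t)) ↔
      IsBoundedUnder (· ≤ ·) atTop fun t => g c (const ι t) :=
  have h := isClopen_setOf_isBoundedUnder hg
  ⟨fun hb => (h.eq_univ ⟨b, hb⟩).ge (mem_univ c), fun hc => (h.eq_univ ⟨c, hc⟩).ge (mem_univ b)⟩

/- Two distinct values below `q` would be separated by one of countably many pairs, and each of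
these pairs is eventually not crossed. -/
theorem eventually_forall_eq_of_forall_le [DenselyOrdered X] [NoMaxOrder X]
    (hsep : ∀ z : X, IsSeparable (Iic z)) (hg : Continuous (uncurry g)) (hK : IsCompact K) {q : X}
    (hq : ∀ᶠ α in atTop, ∀ b ∈ K, ∀ x, const ι α ≤ x → g b x ≤ q) :
    ∀ᶠ α in atTop, ∀ b ∈ K, ∀ x y, const ι α ≤ x → const ι α ≤ y → g b x = g b y := by
  obtain ⟨D, hDc, hD⟩ := exists_countable_forall_exists_between hsep q
  have hcross : ∀ᶠ α in atTop, ∀ d ∈ D ×ˢ D, d.1 < d.2 → ∀ b ∈ K, ∀ x y,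
      const ι α ≤ x → const ι α ≤ y → g b x ≤ d.1 → g b y < d.2 := by
    refine (eventually_countable_ball (hDc.prod hDc)).2 fun d _ => ?_
    by_cases hd : d.1 < d.2
    · exact (eventually_forall_lt_of_le hg hK hd).mono fun _ h _ => h
    · exact Eventually.of_forall fun _ h => absurd h hd
  filter_upwards [hq, hcross] with α hα hcross
  have hle {b : Y} (hb : b ∈ K) {x y : ι → X} (hx : const ι α ≤ x) (hy : const ι α ≤ y) :
      g b y ≤ g b x := by
    by_contra! hlt
    obtain ⟨d, hd, hxd, hdy⟩ := hD _ _ hlt (hα b hb x hx)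
    obtain ⟨c, hc, hxc, hcd⟩ := hD _ _ hxd (hα b hb x hx)
    exact hdy.not_gt (hcross (c, d) ⟨hc, hd⟩ hcd b hb x y hx hy hxc.le)
  exact fun b hb x y hx hy => (hle hb hy hx).antisymm (hle hb hx hy)

theorem eventually_forall_eq_of_isBoundedUnder [DenselyOrdered X] [NoMaxOrder X]
    [WeaklyLocallyCompactSpace Y] (hsep : ∀ z : X, IsSeparable (Iic z))
    (hg : Continuous (uncurry g)) (hK : IsCompact K)
    (hb : ∀ b ∈ K, IsBoundedUnder (· ≤ ·) atTop fun t => g b (const ι t)) :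
    ∀ᶠ α in atTop, ∀ b ∈ K, ∀ x y, const ι α ≤ x → const ι α ≤ y → g b x = g b y := by
  refine hK.induction_on (p := fun s => ∀ᶠ α in atTop, ∀ b ∈ s, ∀ x y,
    const ι α ≤ x → const ι α ≤ y → g b x = g b y) (by simp) ?_ ?_ fun b hbK => ?_
  · exact fun s t hst ht => ht.mono fun α h b hb => h b (hst hb)
  · intro s t hs ht
    filter_upwards [hs, ht] with α hs ht b hb
    exact hb.elim (hs b) (ht b)
  · obtain ⟨U, hU, hUc, q, hq⟩ := exists_mem_nhds_isCompact_eventually_forall_le hg (hb b hbK)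
    exact ⟨U, mem_nhdsWithin_of_mem_nhds hU, eventually_forall_eq_of_forall_le hsep hg hUc hq⟩

theorem eventually_forall_le_of_not_isBoundedUnder [NoMaxOrder X] (hg : Continuous (uncurry g))
    (hK : IsCompact K) (hb : ∀ b ∈ K, ¬ IsBoundedUnder (· ≤ ·) atTop fun t => g b (const ι t))
    (β : X) : ∀ᶠ α in atTop, ∀ b ∈ K, ∀ x, const ι α ≤ x → β ≤ g b x := by
  obtain ⟨q, hq⟩ := exists_gt β
  filter_upwards [eventually_forall_lt_of_le hg hK hq] with α hα b hbK x hx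
  by_contra! hlt
  refine hb b hbK ⟨q, eventually_map.2 ?_⟩
  filter_upwards [eventually_ge_atTop α] with t ht
  exact (hα b hbK x _ hx (fun _ => ht) hlt.le).le

end Interleaving

theorem sSup_lt_omega1 {T : Set Ordinal} (hT : T.Countable) (h : ∀ o ∈ T, o < Omega1) :
    sSup T < Omega1 := by
  have := hT.to_subtype
  rw [sSup_eq_iSup']
  exact Ordinal.iSup_lt_omega_one fun o => h o.1 o.2

theorem succ_lt_omega1 {o : Ordinal} (h : o < Omega1) : Order.succ o < Omega1 :=
  (Cardinal.isSuccLimit_omega 1).succ_lt h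

theorem countable_Iic_of_lt_omega1 {o : Ordinal} (h : o < Omega1) : (Iic o).Countable := by
  rw [← Order.Iio_succ, ← Cardinal.le_aleph0_iff_set_countable, Cardinal.mk_Iio_ordinal,
    Cardinal.lift_le_aleph0, ← Order.lt_succ_iff, Cardinal.succ_aleph0]
  exact Cardinal.lt_omega_iff_card_lt.1 (succ_lt_omega1 h)

namespace LongRay

theorem ordR_of_lt {o : Ordinal} (h : o < Omega1) : ordR o = toLex (⟨o, h⟩, ⟨0, by simp⟩) :=
  dif_pos h

theorem lt_ordR_iff {o : Ordinal} (h : o < Omega1) {x : LongRay} :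
    x < ordR o ↔ (ofLex x).1.1 < o := by
  rw [ordR_of_lt h]
  refine Prod.Lex.lt_iff.trans (or_iff_left_of_imp fun hx => ?_)
  exact absurd hx.2 (not_lt.2 (ofLex x).2.2.1)

theorem ordR_le_ordR {o o' : Ordinal} (h' : o' < Omega1) (hle : o ≤ o') : ordR o ≤ ordR o' := by
  have h := hle.trans_lt h'
  rw [← not_lt, lt_ordR_iff h]
  rw [ordR_of_lt h']
  exact hle.not_gt

theorem lt_ordR_succ (x : LongRay) : x < ordR (Order.succ (ofLex x).1.1) :=
  (lt_ordR_iff (succ_lt_omega1 (ofLex x).1.2)).2 (Order.lt_succ _)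

instance : DenselyOrdered LongRay :=
  inferInstanceAs (DenselyOrdered ({o : Ordinal // o < Omega1} ×ₗ Ico (0 : ℝ) 1))

instance : NoMaxOrder LongRay := ⟨fun x => ⟨_, x.lt_ordR_succ⟩⟩

instance : OrderBot LongRay where
  bot := rayZero
  bot_le x := Prod.Lex.le_iff'.2 ⟨Subtype.mk_le_mk.2 zero_le, fun _ => (ofLex x).2.2.1⟩

theorem bot_lt_ordR {α : Ordinal} (hα : α < Omega1) (h : 0 < α) : ⊥ < ordR α :=
  (lt_ordR_iff hα).2 h

theorem bddAbove_of_countable {s : Set LongRay} (hs : s.Countable) : BddAbove s := by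
  let T := (fun x : LongRay => Order.succ (ofLex x).1.1) '' s
  have hT : T.Countable := hs.image _
  have := hT.to_subtype
  have hlt : sSup T < Omega1 :=
    sSup_lt_omega1 hT (forall_mem_image.2 fun x _ => succ_lt_omega1 (ofLex x).1.2)
  refine ⟨ordR (sSup T), fun x hx => x.lt_ordR_succ.le.trans (ordR_le_ordR hlt ?_)⟩
  exact le_csSup Ordinal.bddAbove_of_small (mem_image_of_mem _ hx)

instance : CountableInterFilter (atTop : Filter LongRay) :=
  countableInterFilter_atTop_of_bddAbove fun _ => bddAbove_of_countable

/-- The copy `{o} × [0,1)` of the half-open unit interval in the long ray. -/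
def segment (o : {o : Ordinal // o < Omega1}) (t : Ico (0 : ℝ) 1) : LongRay := toLex (o, t)

theorem continuous_segment (o : {o : Ordinal // o < Omega1}) : Continuous (segment o) := by
  have hmono : StrictMono (segment o) := fun s t h => Prod.Lex.lt_iff.2 (Or.inr ⟨rfl, h⟩)
  refine (hmono.isEmbedding_of_ordConnected ⟨?_⟩).continuous
  rintro _ ⟨s, rfl⟩ _ ⟨t, rfl⟩ x ⟨hsx, hxt⟩
  have hx : (ofLex x).1 = o :=
    le_antisymm (α := {o : Ordinal // o < Omega1}) (Prod.Lex.monotone_fst_ofLex hxt)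
      (Prod.Lex.monotone_fst_ofLex hsx)
  exact ⟨(ofLex x).2, by rw [segment, ← hx]; rfl⟩

theorem isSeparable_Iic (z : LongRay) : IsSeparable (Iic z) := by
  have hc : (Iic (ofLex z).1).Countable :=
    (countable_Iic_of_lt_omega1 (ofLex z).1.2).preimage Subtype.val_injective
  have := hc.to_subtype
  have hsep : IsSeparable (⋃ o : Iic (ofLex z).1, range (segment o)) :=
    IsSeparable.iUnion fun o => isSeparable_range (continuous_segment o)
  exact hsep.mono fun x hx =>
    mem_iUnion.2 ⟨⟨(ofLex x).1, Prod.Lex.monotone_fst_ofLex hx⟩, (ofLex x).2, rfl⟩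

instance : FirstCountableTopology LongRay :=
  firstCountableTopology_of_isSeparable_Iic isSeparable_Iic

theorem exists_isLUB {s : Set LongRay} (hs : BddAbove s) : ∃ x, IsLUB s x := by
  have : Fact ((0 : ℝ) < 1) := ⟨one_pos⟩
  let : Inhabited (Ico (0 : ℝ) 1) := ⟨⊥⟩
  exact exists_isLUB_lex hs

/-- The long ray as a conditionally complete linear order. It is not a global instance, so that the
order on `LongRay` is still found through its `LinearOrder` instance. -/
abbrev conditionallyCompleteLinearOrder : ConditionallyCompleteLinearOrder LongRay :=
  conditionallyCompleteLinearOrderOfIsLUB fun _ => exists_isLUB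

end LongRay

section Club

open LongRay

theorem ContainsClub.mono {S T : Set Ordinal} (hS : ContainsClub S) (h : S ⊆ T) :
    ContainsClub T :=
  let ⟨C, hC, h'⟩ := hS
  ⟨C, hC.trans h, h'⟩

theorem exists_ordR_of_eventually_atTop {p : LongRay → Prop} (hp : ∀ᶠ x in atTop, p x)
    {a : Ordinal} (ha : a < Omega1) : ∃ b, a < b ∧ b < Omega1 ∧ p (ordR b) := by
  obtain ⟨c, hc⟩ := eventually_atTop.1 hp
  have hlt := succ_lt_omega1 (max_lt ha (ofLex c).1.2)
  refine ⟨_, Order.lt_succ_of_le (le_max_left _ _), hlt, hc _ (c.lt_ordR_succ.le.trans ?_)⟩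
  exact ordR_le_ordR hlt (Order.succ_le_succ (le_max_right _ _))

/- Diagonal intersection: to catch an element of the club above `a`, iterate a map `o ↦ next o`
that sees far enough beyond each `o`; every `r` below the supremum lies below some iterate. -/
theorem containsClub_of_forall_eventually {P : LongRay → LongRay → Prop}
    (hP : ∀ β, ∀ᶠ α in atTop, ∀ r ≤ β, P r α) :
    ContainsClub {α | α < Omega1 ∧ 0 < α ∧ ∀ r < ordR α, P r (ordR α)} := by
  refine ContainsClub.mono
    (S := {α | α < Omega1 ∧ 0 < α ∧ ∀ r < ordR α, ∀ a ≥ ordR α, P r a})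
    ⟨_, Subset.rfl, fun a ha => ?_, fun T hT hTc ⟨o, ho⟩ => ?_⟩
    fun α ⟨hα, hpos, h⟩ => ⟨hα, hpos, fun r hr => h r hr _ le_rfl⟩
  · choose! next hlt hnext hQ using fun (o : Ordinal) (ho : o < Omega1) =>
      exists_ordR_of_eventually_atTop (eventually_forall_ge_atTop.2 (hP (ordR o))) ho
    let u (k : ℕ) : Ordinal := next^[k] a
    have hu (k : ℕ) : u (k + 1) = next (u k) := iterate_succ_apply' next k a
    have huΩ (k : ℕ) : u k < Omega1 := by
      induction k with
      | zero => exact ha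
      | succ k ih => exact (hu k).trans_lt (hnext _ ih)
    have hsup : ⨆ k, u k < Omega1 := Ordinal.iSup_lt_omega_one huΩ
    refine ⟨⨆ k, u k, ⟨hsup, ?_, fun r hr b hb => ?_⟩, Ordinal.le_iSup u 0⟩
    · exact zero_le.trans_lt ((hlt a ha).trans_le (Ordinal.le_iSup u 1))
    · obtain ⟨k, hk⟩ := Ordinal.lt_iSup_iff.1 ((lt_ordR_iff hsup).1 hr)
      refine hQ (u k) (huΩ k) b (hb.trans' (ordR_le_ordR hsup ?_)) r
        ((lt_ordR_iff (huΩ k)).2 hk).le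
      exact (hu k).symm.trans_le (Ordinal.le_iSup u (k + 1))
  · have hsup : sSup T < Omega1 := sSup_lt_omega1 hTc fun o ho => (hT ho).1
    have := hTc.to_subtype
    have hle (t : Ordinal) (ht : t ∈ T) : t ≤ sSup T := le_csSup Ordinal.bddAbove_of_small ht
    refine ⟨hsup, (hT ho).2.1.trans_le (hle o ho), fun r hr b hb => ?_⟩
    obtain ⟨t, ht, hrt⟩ := exists_lt_of_lt_csSup ⟨o, ho⟩ ((lt_ordR_iff hsup).1 hr)
    exact (hT ht).2.2 r ((lt_ordR_iff (hT ht).1).2 hrt) b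
      (hb.trans' (ordR_le_ordR hsup (hle t ht)))

theorem containsClub_of_forall_eventually_pi {κ : Type*} [Finite κ]
    {P : (κ → LongRay) → LongRay → Prop}
    (hP : ∀ β, ∀ᶠ α in atTop, ∀ b ≤ const κ β, P b α) (hcl : ∀ α, IsClosed {b | P b α}) :
    ContainsClub {α | α < Omega1 ∧ ∀ b ≤ const κ (ordR α), P b (ordR α)} := by
  refine (containsClub_of_forall_eventually (P := fun r α => ∀ b ≤ const κ r, P b α)
    fun β => ?_).mono ?_
  · filter_upwards [hP β] with α hα r hr b hb using hα b (hb.trans fun _ => hr)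
  · rintro α ⟨hα, hpos, h⟩
    exact ⟨hα, Iic_const_subset_of_isClosed (bot_lt_ordR hα hpos) (hcl _) h⟩

end Club

section Splitting

variable {X ν : Type*} [DecidableEq ν] {I : Finset ν} {f : (ν → X) → X}

/-- The map `f` as a function of the coordinates off `I`, which play the role of a parameter, and
of the coordinates in `I`. -/
def curryOn (I : Finset ν) (f : (ν → X) → X) (b : {j // j ∉ I} → X) (x : {i // i ∈ I} → X) : X :=
  f ((Equiv.piEquivPiSubtypeProd (· ∈ I) fun _ => X).symm (x, b))

theorem curryOn_restrict (x : ν → X) : curryOn I f (fun j => x j) (fun i => x i) = f x :=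
  congrArg f ((Equiv.piEquivPiSubtypeProd (· ∈ I) fun _ => X).symm_apply_apply x)

theorem continuous_uncurry_curryOn [TopologicalSpace X] (hf : Continuous f) :
    Continuous (uncurry (curryOn I f)) :=
  hf.comp ((Homeomorph.piEquivPiSubtypeProd (· ∈ I) fun _ => X).symm.continuous.comp
    continuous_swap)

end Splitting

section Diagonal

open LongRay

attribute [local instance] LongRay.conditionallyCompleteLinearOrder

variable {n : ℕ} {f : (Fin n → LongRay) → LongRay} {I : Finset (Fin n)}

theorem image_Delta_eq_range_curryOn (hI : I.Nonempty) (c : Fin n → LongRay) :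
    f '' Delta n I c = range fun t => curryOn I f (fun j => c j) (const _ t) := by
  apply Subset.antisymm
  · rintro _ ⟨x, ⟨hx, hxc⟩, rfl⟩
    obtain ⟨i, hi⟩ := hI
    have hconst : (fun k : {k // k ∈ I} => x k) = const _ (x i) := funext fun k => hx k k.2 i hi
    have hoff : (fun k : {k // k ∉ I} => x k) = fun k : {k // k ∉ I} => c k :=
      funext fun k => hxc k k.2
    exact ⟨x i, by simp only [← hconst, ← hoff, curryOn_restrict]⟩
  · rintro _ ⟨t, rfl⟩
    refine ⟨_, ⟨fun i hi j hj => ?_, fun j hj => ?_⟩, rfl⟩ <;> simp [*]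

theorem iCofinal_iff_not_isBoundedUnder (hf : Continuous f) (hI : I.Nonempty)
    (b : {j // j ∉ I} → LongRay) :
    ICofinal n f I ↔ ¬ IsBoundedUnder (· ≤ ·) atTop fun t => curryOn I f b (const _ t) := by
  have hg := continuous_uncurry_curryOn (I := I) hf
  rw [ICofinal, image_Delta_eq_range_curryOn hI, bddAbove_range_iff_isBoundedUnder_atTop]
  · have := weaklyLocallyCompactSpace_of_orderBot (X := LongRay)
    exact not_congr (isBoundedUnder_iff_of_preconnectedSpace hg _ b)
  · exact hg.comp (f := fun t => (_, const _ t)) (by fun_prop)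

theorem containsClub_setOf_forall_eq_on_ESet (hf : Continuous f)
    (hb : ∀ b, IsBoundedUnder (· ≤ ·) atTop fun t => curryOn I f b (const _ t)) :
    ContainsClub {α : Ordinal | α < Omega1 ∧
      ∀ b : Fin n → LongRay, (∀ j ∉ I, b j ≤ ordR α) →
        ∀ x ∈ ESet n I b (ordR α), ∀ y ∈ ESet n I b (ordR α), f x = f y} := by
  have hg := continuous_uncurry_curryOn (I := I) hf
  have := weaklyLocallyCompactSpace_of_orderBot (X := LongRay)
  refine (containsClub_of_forall_eventually_pi
    (P := fun (b : {j // j ∉ I} → LongRay) α => ∀ x y, const _ α ≤ x → const _ α ≤ y →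
      curryOn I f b x = curryOn I f b y) (fun β => ?_) fun α => ?_).mono ?_
  · filter_upwards [eventually_forall_eq_of_isBoundedUnder isSeparable_Iic hg
      (isCompact_Icc (a := ⊥) (b := const _ β)) fun b _ => hb b] with α hα b hbβ
    exact hα b ⟨bot_le, hbβ⟩
  · simp only [ofPred_forall]
    exact isClosed_iInter fun x => isClosed_iInter fun y => isClosed_iInter fun _ =>
      isClosed_iInter fun _ =>
        isClosed_eq (hg.comp (Continuous.prodMk_left x)) (hg.comp (Continuous.prodMk_left y))
  · rintro α ⟨hα, h⟩
    refine ⟨hα, fun b hbα x ⟨hx, hxb⟩ y ⟨hy, hyb⟩ => ?_⟩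
    have hxy : (fun j : {j // j ∉ I} => y j) = fun j : {j // j ∉ I} => x j :=
      funext fun j => (hyb j j.2).trans (hxb j j.2).symm
    rw [← curryOn_restrict (I := I) (f := f) x, ← curryOn_restrict (I := I) (f := f) y, hxy]
    exact h _ (fun j => (hxb j j.2).trans_le (hbα j j.2)) _ _ (fun i => hx i i.2) fun i => hy i i.2

/- The value of `f` is compared with an extra parameter `b none`, so that the inequality can be
passed to the limit together with the remaining parameters. -/
theorem containsClub_setOf_forall_ordR_le_on_ESet (hf : Continuous f)
    (hb : ∀ b, ¬ IsBoundedUnder (· ≤ ·) atTop fun t => curryOn I f b (const _ t)) :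
    ContainsClub {α : Ordinal | α < Omega1 ∧
      ∀ b : Fin n → LongRay, (∀ j ∉ I, b j ≤ ordR α) →
        ∀ x ∈ ESet n I b (ordR α), ordR α ≤ f x} := by
  have hg := continuous_uncurry_curryOn (I := I) hf
  refine (containsClub_of_forall_eventually_pi
    (P := fun (b : Option {j // j ∉ I} → LongRay) α => ∀ x, const _ α ≤ x →
      b none ≤ curryOn I f (b ∘ some) x) (fun β => ?_) fun α => ?_).mono ?_
  · filter_upwards [eventually_forall_le_of_not_isBoundedUnder hg
      (isCompact_Icc (a := ⊥) (b := const _ β)) (fun b _ => hb b) β] with α hα b hbβ x hx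
    exact (hbβ none).trans (hα (b ∘ some) ⟨bot_le, fun j => hbβ (some j)⟩ x hx)
  · simp only [ofPred_forall]
    exact isClosed_iInter fun x => isClosed_iInter fun _ =>
      isClosed_le (continuous_apply none) (hg.comp (f := fun b => (b ∘ some, x)) (by fun_prop))
  · rintro α ⟨hα, h⟩
    refine ⟨hα, fun b hbα x ⟨hx, hxb⟩ => ?_⟩
    rw [← curryOn_restrict (I := I) (f := f) x]
    exact h (fun o => o.elim (ordR α) fun j => x j)
      (Option.forall.2 ⟨le_rfl, fun j => (hxb j j.2).trans_le (hbα j j.2)⟩) _ fun i => hx i i.2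

end Diagonal

/-- (i) if `f` is `I`-bounded, the set of `α < ω₁` such that `f` is
constant on each `E_I(b,α)` with `b ∈ [0,α]^{N∖I}` contains a club; (ii) if `f` is
`I`-cofinal, the set of `α < ω₁` with `f(Δ_I(b) ∩ M_I(α)) ⊆ [α,ω₁)` for all
`b ∈ [0,α]^{N∖I}` contains a club. -/
theorem club_of_good_ordinals (n : ℕ) (f : (Fin n → LongRay) → LongRay)
    (hf : Continuous f) (I : Finset (Fin n)) (hI : I.Nonempty) :
    (¬ ICofinal n f I →
      ContainsClub {α : Ordinal | α < Omega1 ∧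
        ∀ b : Fin n → LongRay, (∀ j ∉ I, b j ≤ ordR α) →
          ∀ x ∈ ESet n I b (ordR α), ∀ y ∈ ESet n I b (ordR α), f x = f y}) ∧
    (ICofinal n f I →
      ContainsClub {α : Ordinal | α < Omega1 ∧
        ∀ b : Fin n → LongRay, (∀ j ∉ I, b j ≤ ordR α) →
          ∀ x ∈ Delta n I b ∩ MSet n I (ordR α), ordR α ≤ f x}) := by
  constructor
  · intro hcof
    refine containsClub_setOf_forall_eq_on_ESet hf fun b => ?_
    rwa [iCofinal_iff_not_isBoundedUnder hf hI b, not_not] at hcof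
  · intro hcof
    refine (containsClub_setOf_forall_ordR_le_on_ESet hf fun b =>
      (iCofinal_iff_not_isBoundedUnder hf hI b).1 hcof).mono ?_
    exact fun α ⟨hα, h⟩ => ⟨hα, fun b hb x ⟨hxb, hx⟩ => h b hb x ⟨hx, hxb.2⟩⟩
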